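/- Assume Conditions (A) and (B) hold. Let x* ∈ Γ be a point with V(x*) = 0 and let A = (∂V_i/∂x_j(x*)) be the Jacobian matrix of V at x*. Then Aᵀ ∇f(x*) = (tr A / r) · ∇f(x*); in particular, since ∇f(x*) ≠ 0, the number tr(A)/r is an eigenvalue of the matrix A. Equivalently, if λ₁, …, λₙ are the complex eigenvalues of A counted with multiplicity, then there exists an index j with λ₁ + ⋯ + λₙ = r·λ_j. -/

import Mathlib

open Filter Topology

/-- Partial derivative of `g : ℝⁿ → ℝ` in the `i`-th coordinate direction. -/
noncomputable def pderiv' {n : ℕ} (g : (Fin n → ℝ) → ℝ) (i : Fin n) (x : Fin n → ℝ) : ℝ :=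
  fderiv ℝ g x (Pi.single i 1)

/-- Divergence of a vector field on ℝⁿ. -/
noncomputable def diverg {n : ℕ} (V : (Fin n → ℝ) → (Fin n → ℝ)) (x : Fin n → ℝ) : ℝ :=
  ∑ i, pderiv' (fun y => V y i) i x

/-- Gradient of `g : ℝⁿ → ℝ`. -/
noncomputable def grad' {n : ℕ} (g : (Fin n → ℝ) → ℝ) (x : Fin n → ℝ) : Fin n → ℝ :=
  fun i => pderiv' g i x

/-- The Euclidean inner product on ℝⁿ. -/
noncomputable def dotp {n : ℕ} (u w : Fin n → ℝ) : ℝ := ∑ i, u i * w i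

/-- Condition (A): for every `x* ∈ Γ`, `|f x|^(r+1) · div W x → 0` as `x → x*`
with `x ∈ Ω \ Γ`. -/
def CondA {n : ℕ} (Ω Γ : Set (Fin n → ℝ)) (f : (Fin n → ℝ) → ℝ) (r : ℝ)
    (W : (Fin n → ℝ) → (Fin n → ℝ)) : Prop :=
  ∀ xs ∈ Γ, Filter.Tendsto (fun x => |f x| ^ (r + 1) * diverg W x)
    (nhdsWithin xs (Ω \ Γ)) (nhds 0)

/-- Condition (B): for every `x* ∈ Γ` with `V x* = 0`, one has
`|f x|^r · div W x → 0` and `|f x|^(r+1) · ∂(div W)/∂x_i x → 0` as `x → x*`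
with `x ∈ Ω \ Γ`, for each `i`. -/
def CondB {n : ℕ} (Ω Γ : Set (Fin n → ℝ)) (f : (Fin n → ℝ) → ℝ) (r : ℝ)
    (V W : (Fin n → ℝ) → (Fin n → ℝ)) : Prop :=
  ∀ xs ∈ Γ, V xs = 0 →
    Filter.Tendsto (fun x => |f x| ^ r * diverg W x) (nhdsWithin xs (Ω \ Γ)) (nhds 0) ∧
    ∀ i : Fin n, Filter.Tendsto (fun x => |f x| ^ (r + 1) * pderiv' (diverg W) i x)
      (nhdsWithin xs (Ω \ Γ)) (nhds 0)

/-! Off `{f = 0}` one has `|f| ^ r * div W = div V - r * (df(V) / f)`, so the first half of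
Condition (B) says that `df(V) / f` tends to `tr A / r` at `x*`. Both `df(V)` and `f` vanish at
`x*`, with derivatives `df ∘ A` and `df` there, and a limit `c` of their quotient forces
`df ∘ A = c • df`: as `df ≠ 0`, the complement of `{f = 0}` approaches `x*` along enough directions
to determine derivatives. -/

section TendstoDiv

variable {𝕜 E F : Type*} [NontriviallyNormedField 𝕜] [NormedAddCommGroup E] [NormedSpace 𝕜 E]
  [NormedAddCommGroup F] [NormedSpace 𝕜 F] {x₀ : E}

theorem mem_tangentConeAt_setOf_ne {f : E → F} {f' : E →L[𝕜] F} (hf : HasFDerivAt f f' x₀)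
    {v : E} (hv : f' v ≠ 0) (c : F) : v ∈ tangentConeAt 𝕜 {x | f x ≠ c} x₀ :=
  mem_tangentConeAt_of_add_smul_mem tendsto_id ((hf.hasLineDerivAt v).eventually_ne hv)

theorem uniqueDiffWithinAt_setOf_ne {f : E → F} {f' : E →L[𝕜] F} (hf : HasFDerivAt f f' x₀)
    (hf' : f' ≠ 0) (c : F) : UniqueDiffWithinAt 𝕜 {x | f x ≠ c} x₀ := by
  obtain ⟨w, hw⟩ : ∃ w, f' w ≠ 0 := by
    by_contra! h
    exact hf' (ContinuousLinearMap.ext h)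
  have hcone : ∀ v, f' v ≠ 0 → v ∈ Submodule.span 𝕜 (tangentConeAt 𝕜 {x | f x ≠ c} x₀) :=
    fun v hv => Submodule.subset_span (mem_tangentConeAt_setOf_ne hf hv c)
  have hspan : Submodule.span 𝕜 (tangentConeAt 𝕜 {x | f x ≠ c} x₀) = ⊤ := by
    refine Submodule.eq_top_iff'.mpr fun v => ?_
    by_cases hv : f' v = 0
    · have hadd := hcone (v + w) (by simpa [hv] using hw)
      exact (Submodule.add_mem_iff_left _ (hcone w hw)).mp hadd
    · exact hcone v hv
  refine ⟨?_, mem_closure_of_nonempty_tangentConeAt ⟨w, mem_tangentConeAt_setOf_ne hf hw c⟩⟩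
  rw [hspan]
  exact dense_univ

theorem hasFDerivAt_eq_smul_of_tendsto_div {f g : E → 𝕜} {f' g' : E →L[𝕜] 𝕜} {c : 𝕜}
    (hf : HasFDerivAt f f' x₀) (hg : HasFDerivAt g g' x₀) (hf' : f' ≠ 0) (hfx : f x₀ = 0)
    (hgx : g x₀ = 0) (hlim : Tendsto (fun x => g x / f x) (𝓝[{x | f x ≠ 0}] x₀) (𝓝 c)) :
    g' = c • f' := by
  have hsub : HasFDerivAt (fun x => g x - c * f x) (g' - c • f') x₀ := hg.sub (hf.const_mul c)
  have hf_bigO : f =O[𝓝[{x | f x ≠ 0}] x₀] fun x => x - x₀ := by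
    simpa [hfx] using hf.isBigO_sub.mono nhdsWithin_le_nhds
  have hsub_littleO : (fun x => g x - c * f x) =o[𝓝[{x | f x ≠ 0}] x₀] fun x => x - x₀ := by
    have hquot : (fun x => g x / f x - c) =o[𝓝[{x | f x ≠ 0}] x₀] fun _ => (1 : ℝ) :=
      (Asymptotics.isLittleO_one_iff ℝ).mpr (by simpa using hlim.sub_const c)
    refine ((hquot.mul_isBigO hf_bigO.norm_right).congr' ?_ ?_).of_norm_right
    · filter_upwards [self_mem_nhdsWithin] with x hx
      have hx : f x ≠ 0 := hx
      field_simp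
    · simp
  have hzero : HasFDerivWithinAt (fun x => g x - c * f x) (0 : E →L[𝕜] 𝕜) {x | f x ≠ 0} x₀ :=
    .of_isLittleO (by simpa [hfx, hgx] using hsub_littleO)
  exact sub_eq_zero.mp
    ((uniqueDiffWithinAt_setOf_ne hf hf' 0).eq hsub.hasFDerivWithinAt hzero)

theorem hasFDerivAt_clm_apply_of_eq_zero {G : Type*} [NormedAddCommGroup G] [NormedSpace 𝕜 G]
    {L : E → F →L[𝕜] G} {V : E → F} {V' : E →L[𝕜] F} (hL : ContinuousAt L x₀)
    (hV : HasFDerivAt V V' x₀) (hVx : V x₀ = 0) :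
    HasFDerivAt (fun x => L x (V x)) (L x₀ ∘L V') x₀ := by
  have hV_bigO : V =O[𝓝 x₀] fun x => x - x₀ := by simpa [hVx] using hV.isBigO_sub
  have hL_littleO : (fun x => L x - L x₀) =o[𝓝 x₀] fun _ => (1 : ℝ) :=
    (Asymptotics.isLittleO_one_iff ℝ).mpr (tendsto_sub_nhds_zero_iff.mpr hL)
  have happly : (fun x => (L x - L x₀) (V x)) =O[𝓝 x₀] fun x => ‖L x - L x₀‖ * ‖V x‖ :=
    .of_norm_le fun x => (L x - L x₀).le_opNorm (V x)
  have hrest : HasFDerivAt (fun x => (L x - L x₀) (V x)) (0 : E →L[𝕜] G) x₀ := by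
    refine .of_isLittleO ?_
    have := happly.trans_isLittleO (hL_littleO.norm_left.mul_isBigO hV_bigO.norm_norm)
    simpa [hVx] using this
  simpa using ((L x₀).hasFDerivAt.comp x₀ hV).fun_add hrest

end TendstoDiv

section VectorField

variable {n : ℕ} {f g : (Fin n → ℝ) → ℝ} {V W : (Fin n → ℝ) → Fin n → ℝ} {x : Fin n → ℝ}

/-- The Jacobian matrix `(∂Vᵢ/∂xⱼ)` of a vector field on `ℝⁿ`, with rows indexed by components. -/
noncomputable def jacobian (V : (Fin n → ℝ) → Fin n → ℝ) (x : Fin n → ℝ) :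
    Matrix (Fin n) (Fin n) ℝ :=
  Matrix.of fun i j => pderiv' (fun y => V y i) j x

theorem trace_jacobian (V : (Fin n → ℝ) → Fin n → ℝ) (x : Fin n → ℝ) :
    (jacobian V x).trace = diverg V x :=
  rfl

theorem grad'_dotProduct (f : (Fin n → ℝ) → ℝ) (x v : Fin n → ℝ) :
    grad' f x ⬝ᵥ v = fderiv ℝ f x v := by
  conv_rhs => rw [pi_eq_sum_univ' v]
  simp [dotProduct, grad', pderiv', mul_comm]

theorem grad'_ne_zero_iff : grad' f x ≠ 0 ↔ fderiv ℝ f x ≠ 0 := by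
  refine not_congr ⟨fun h => ?_, fun h => funext fun i => by simp [grad', pderiv', h]⟩
  ext v
  simp [← grad'_dotProduct, h]

theorem jacobian_col (hV : DifferentiableAt ℝ V x) (j : Fin n) :
    (jacobian V x).col j = fderiv ℝ V x (Pi.single j 1) := by
  ext i
  simp [jacobian, pderiv', fderiv_apply hV]

theorem diverg_congr (h : V =ᶠ[𝓝 x] W) : diverg V x = diverg W x :=
  Finset.sum_congr rfl fun i _ =>
    DFunLike.congr_fun (h.fun_comp (fun w => w i)).fderiv_eq (Pi.single i 1)

theorem diverg_smul (hg : DifferentiableAt ℝ g x) (hV : DifferentiableAt ℝ V x) :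
    diverg (fun y => g y • V y) x = g x * diverg V x + fderiv ℝ g x (V x) := by
  have hcoord : ∀ i, pderiv' (fun y => (g y • V y) i) i x =
      g x * pderiv' (fun y => V y i) i x + grad' g x i * V x i := by
    intro i
    simp [pderiv', grad', fderiv_fun_mul hg (differentiableAt_pi.mp hV i), mul_comm]
  rw [← grad'_dotProduct, diverg, Finset.sum_congr rfl fun i _ => hcoord i,
    Finset.sum_add_distrib, ← Finset.mul_sum]
  rfl

theorem continuousAt_diverg (hV : ContDiffAt ℝ 1 V x) : ContinuousAt (diverg V) x :=
  tendsto_finsetSum _ fun i _ =>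
    ((contDiffAt_pi.mp hV i).fderiv_right (m := 0) le_rfl).continuousAt.clm_apply
      continuousAt_const

theorem hasDerivAt_abs_rpow_of_ne_zero {t : ℝ} (ht : t ≠ 0) (p : ℝ) :
    HasDerivAt (fun u : ℝ => |u| ^ p) (p * |t| ^ p / t) t := by
  have hexp : ∀ u : ℝ, u ≠ 0 → |u| ^ p = Real.exp (Real.log u * p) := fun u hu => by
    rw [Real.rpow_def_of_pos (abs_pos.mpr hu), Real.log_abs]
  have hderiv := ((Real.hasDerivAt_log ht).mul_const p).exp
  rw [← hexp t ht] at hderiv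
  exact (hderiv.congr_of_eventuallyEq ((eventually_ne_nhds ht).mono hexp)).congr_deriv (by ring)

theorem abs_rpow_mul_diverg_abs_rpow_smul (hf : DifferentiableAt ℝ f x)
    (hV : DifferentiableAt ℝ V x) (hfx : f x ≠ 0) (r : ℝ) :
    |f x| ^ r * diverg (fun y => |f y| ^ (-r) • V y) x =
      diverg V x - r * (fderiv ℝ f x (V x) / f x) := by
  have hpow : HasFDerivAt (fun y => |f y| ^ (-r)) ((-r * |f x| ^ (-r) / f x) • fderiv ℝ f x) x :=
    (hasDerivAt_abs_rpow_of_ne_zero hfx (-r)).comp_hasFDerivAt x hf.hasFDerivAt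
  have hcancel : |f x| ^ r * |f x| ^ (-r) = 1 := by
    rw [← Real.rpow_add (abs_pos.mpr hfx), add_neg_cancel, Real.rpow_zero]
  rw [diverg_smul hpow.differentiableAt hV, hpow.fderiv, smul_apply, smul_eq_mul]
  linear_combination (diverg V x - r * (fderiv ℝ f x (V x) / f x)) * hcancel

theorem tendsto_fderiv_apply_div {r : ℝ} (hr : r ≠ 0) (hf : ContDiffAt ℝ 1 f x)
    (hV : ContDiffAt ℝ 1 V x) (hW : ∀ᶠ y in 𝓝[{y | f y ≠ 0}] x, W y = |f y| ^ (-r) • V y)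
    (hlim : Tendsto (fun y => |f y| ^ r * diverg W y) (𝓝[{y | f y ≠ 0}] x) (𝓝 0)) :
    Tendsto (fun y => fderiv ℝ f y (V y) / f y) (𝓝[{y | f y ≠ 0}] x) (𝓝 (diverg V x / r)) := by
  have hdiff := ((continuousAt_diverg hV).tendsto.mono_left nhdsWithin_le_nhds).sub hlim
  rw [sub_zero] at hdiff
  refine (hdiff.div_const r).congr' ?_
  filter_upwards [eventually_eventually_nhdsWithin.mpr hW, self_mem_nhdsWithin,
    nhdsWithin_le_nhds (hf.eventually (by simp)), nhdsWithin_le_nhds (hV.eventually (by simp))]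
    with y hWy hfy hfdy hVdy
  have hfdy := hfdy.differentiableAt one_ne_zero
  have hVdy := hVdy.differentiableAt one_ne_zero
  rw [nhdsWithin_eq_nhds.mpr (hfdy.continuousAt.eventually_ne hfy)] at hWy
  rw [diverg_congr hWy, abs_rpow_mul_diverg_abs_rpow_smul hfdy hVdy hfy]
  field_simp
  ring

theorem transpose_jacobian_mulVec_grad' {c : ℝ} (hf : ContDiffAt ℝ 1 f x)
    (hV : DifferentiableAt ℝ V x) (hfx : f x = 0) (hVx : V x = 0) (hgrad : grad' f x ≠ 0)
    (hlim : Tendsto (fun y => fderiv ℝ f y (V y) / f y) (𝓝[{y | f y ≠ 0}] x) (𝓝 c)) :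
    (jacobian V x).transpose.mulVec (grad' f x) = c • grad' f x := by
  have hfd : HasFDerivAt f (fderiv ℝ f x) x := (hf.differentiableAt one_ne_zero).hasFDerivAt
  have hfVd := hasFDerivAt_clm_apply_of_eq_zero
    (hf.fderiv_right (m := 0) le_rfl).continuousAt hV.hasFDerivAt hVx
  have heq : fderiv ℝ f x ∘L fderiv ℝ V x = c • fderiv ℝ f x :=
    hasFDerivAt_eq_smul_of_tendsto_div hfd hfVd (grad'_ne_zero_iff.mp hgrad) hfx (by simp [hVx])
      hlim
  ext j
  calc (jacobian V x).transpose.mulVec (grad' f x) j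
      = grad' f x ⬝ᵥ (jacobian V x).col j := dotProduct_comm _ _
    _ = fderiv ℝ f x (fderiv ℝ V x (Pi.single j 1)) := by rw [grad'_dotProduct, jacobian_col hV]
    _ = c * grad' f x j := congrArg (· (Pi.single j 1)) heq

end VectorField

section Eigenvalue

variable {ι κ : Type*} [Fintype ι] [Fintype κ]

theorem hasEigenvalue_mulVecLin_of_transpose_mulVec {K : Type*} [Field K] {A : Matrix ι ι K}
    {c : K} {v : ι → K} (hv : v ≠ 0) (h : A.transpose.mulVec v = c • v) :
    Module.End.HasEigenvalue A.mulVecLin c := by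
  have htranspose : Module.End.HasEigenvalue A.transpose.mulVecLin c :=
    Module.End.hasEigenvalue_of_hasEigenvector
      (Module.End.hasEigenvector_iff.mpr ⟨Module.End.mem_eigenspace_iff.mpr h, hv⟩)
  classical
  rwa [Module.End.hasEigenvalue_iff_isRoot_charpoly, Matrix.charpoly_mulVecLin,
    Matrix.charpoly_transpose, ← Matrix.charpoly_mulVecLin,
    ← Module.End.hasEigenvalue_iff_isRoot_charpoly] at htranspose

variable [DecidableEq ι]

theorem trace_eq_sum_of_charpoly_eq_prod {R : Type*} [CommRing R] {A : Matrix ι ι R}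
    {lam : κ → R} (h : A.charpoly = ∏ j, (Polynomial.X - Polynomial.C (lam j))) :
    A.trace = ∑ j, lam j := by
  rw [Matrix.trace_eq_neg_charpoly_nextCoeff, h, Polynomial.prod_X_sub_C_nextCoeff, neg_neg]

theorem exists_sum_eq_mul_of_isRoot_charpoly {R : Type*} [CommRing R] [IsDomain R]
    {A : Matrix ι ι R} {r c : R} (hc : A.charpoly.IsRoot c) (htr : A.trace = r * c) {lam : κ → R}
    (h : A.charpoly = ∏ j, (Polynomial.X - Polynomial.C (lam j))) :
    ∃ j, ∑ i, lam i = r * lam j := by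
  obtain ⟨j, -, hj⟩ : ∃ j ∈ Finset.univ, c - lam j = 0 := by
    simpa [h, Polynomial.eval_prod, Finset.prod_eq_zero_iff] using hc
  exact ⟨j, by rw [← trace_eq_sum_of_charpoly_eq_prod h, htr, sub_eq_zero.mp hj]⟩

end Eigenvalue

theorem nhdsWithin_setOf_ne_zero_le {X M : Type*} [TopologicalSpace X] [Zero M] {Ω : Set X} {x : X}
    (hΩ : Ω ∈ 𝓝 x) (f : X → M) :
    𝓝[{y | f y ≠ 0}] x ≤ 𝓝[Ω \ {y | y ∈ Ω ∧ f y = 0}] x := by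
  rw [← nhdsWithin_inter_of_mem' (nhdsWithin_le_nhds hΩ)]
  exact nhdsWithin_mono x fun y hy => ⟨hy.2, fun h => hy.1 h.2⟩

theorem stmt5_general {n : ℕ} {f : (Fin n → ℝ) → ℝ} {V W : (Fin n → ℝ) → Fin n → ℝ}
    {xs : Fin n → ℝ} (hf : ContDiffAt ℝ 1 f xs) (hV : ContDiffAt ℝ 1 V xs) {r : ℝ} (hr : r ≠ 0)
    (hW : ∀ᶠ x in 𝓝[{x | f x ≠ 0}] xs, W x = |f x| ^ (-r) • V x)
    (hlim : Tendsto (fun x => |f x| ^ r * diverg W x) (𝓝[{x | f x ≠ 0}] xs) (𝓝 0))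
    (hfxs : f xs = 0) (hgrad : grad' f xs ≠ 0) (hVxs : V xs = 0) :
    (jacobian V xs).transpose.mulVec (grad' f xs) =
      ((jacobian V xs).trace / r) • grad' f xs ∧
    Module.End.HasEigenvalue (Matrix.mulVecLin (jacobian V xs)) ((jacobian V xs).trace / r) ∧
    ∀ lam : Fin n → ℂ,
      ((jacobian V xs).map (fun t => (t : ℂ))).charpoly =
        ∏ j, (Polynomial.X - Polynomial.C (lam j)) →
      ∃ j, ∑ i, lam i = (r : ℂ) * lam j := by
  have heigvec := transpose_jacobian_mulVec_grad' hf (hV.differentiableAt one_ne_zero) hfxs hVxs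
    hgrad (tendsto_fderiv_apply_div hr hf hV hW hlim)
  rw [← trace_jacobian] at heigvec
  set A := jacobian V xs
  have heigval := hasEigenvalue_mulVecLin_of_transpose_mulVec hgrad heigvec
  refine ⟨heigvec, heigval, fun lam hlam => ?_⟩
  rw [Module.End.hasEigenvalue_iff_isRoot_charpoly, Matrix.charpoly_mulVecLin] at heigval
  have hroot : (A.map Complex.ofRealHom).charpoly.IsRoot ↑(A.trace / r) := by
    rw [Matrix.charpoly_map]
    exact heigval.map
  have htrace : (A.map Complex.ofRealHom).trace = r * ↑(A.trace / r) := by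
    rw [← Complex.ofReal_mul, mul_div_cancel₀ _ hr]
    exact (AddMonoidHom.map_trace Complex.ofRealHom A).symm
  exact exists_sum_eq_mul_of_isRoot_charpoly hroot htrace hlam

/-- Assume Conditions (A) and (B). If `x* ∈ Γ` with `V x* = 0` and `A` is the Jacobian
matrix of `V` at `x*`, then `Aᵀ ∇f(x*) = (tr A / r) · ∇f(x*)`; in particular `tr A / r`
is an eigenvalue of `A`. Equivalently, if `λ₁, …, λₙ` are the complex eigenvalues of `A`
counted with multiplicity, then `λ₁ + ⋯ + λₙ = r·λⱼ` for some index `j`. -/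
theorem stmt5 {n : ℕ} (hn : 2 ≤ n) (Ω Γ : Set (Fin n → ℝ)) (hΩ : IsOpen Ω)
    (f : (Fin n → ℝ) → ℝ) (s : ℕ) (hs : 2 ≤ s) (hf : ContDiffOn ℝ s f Ω)
    (hΓ : Γ = {x | x ∈ Ω ∧ f x = 0}) (hΓne : Γ.Nonempty)
    (hreg : ∀ x ∈ Γ, grad' f x ≠ 0)
    (V : (Fin n → ℝ) → (Fin n → ℝ)) (hV : ContDiffOn ℝ s V Ω)
    (r : ℝ) (hr : 0 < r)
    (W : (Fin n → ℝ) → (Fin n → ℝ))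
    (hW : ∀ x ∈ Ω \ Γ, W x = |f x| ^ (-r) • V x)
    (hA : CondA Ω Γ f r W) (hB : CondB Ω Γ f r V W)
    (xs : Fin n → ℝ) (hxs : xs ∈ Γ) (hVxs : V xs = 0)
    (A : Matrix (Fin n) (Fin n) ℝ)
    (hAdef : A = Matrix.of fun i j => pderiv' (fun y => V y i) j xs) :
    A.transpose.mulVec (grad' f xs) = (A.trace / r) • grad' f xs ∧
    Module.End.HasEigenvalue (Matrix.mulVecLin A) (A.trace / r) ∧
    ∀ lam : Fin n → ℂ,
      (A.map (fun t => (t : ℂ))).charpoly = ∏ j, (Polynomial.X - Polynomial.C (lam j)) →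
      ∃ j, ∑ i, lam i = (r : ℂ) * lam j := by
  subst hΓ hAdef
  have hΩxs := hΩ.mem_nhds hxs.1
  have hs1 : (1 : WithTop ℕ∞) ≤ s := by exact_mod_cast one_le_two.trans hs
  have hle := nhdsWithin_setOf_ne_zero_le hΩxs f
  exact stmt5_general ((hf.contDiffAt hΩxs).of_le hs1) ((hV.contDiffAt hΩxs).of_le hs1) hr.ne'
    ((eventually_mem_nhdsWithin.mono hW).filter_mono hle) ((hB xs hxs hVxs).1.mono_left hle)
    hxs.2 (hreg xs hxs) hVxs
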